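/- Let K and H be finite-dimensional complex Hilbert spaces realized as ℂ^m and ℂ^n, and identify operators with matrices. Let τ be a positive-semidefinite m×m matrix with trace 1, let ψ0, ψ1 be orthonormal vectors in ℂ^n, and let U be a unitary (mn)×(mn) matrix. Define T(ρ) := U (τ ⊗ ρ) U* for n×n matrices ρ, where ⊗ is the Kronecker product. Let B be a Hermitian (mn)×(mn) matrix, and for j = 0, 1 set b_j := tr(T(|ψ_j⟩⟨ψ_j|) B) and σ_j² := tr(T(|ψ_j⟩⟨ψ_j|) B²) − b_j², with σ_j ≥ 0; suppose b0 ≠ b1. Then for all complex α0, α1 with |α0|² + |α1|² = 1, ψ := α0 ψ0 + α1 ψ1, and every Hermitian (mn)×(mn) matrix A satisfying ‖AB − BA‖ ≤ δ·‖A‖·‖B‖ (δ ≥ 0, ‖·‖ the ℓ²-operator norm), one has |tr(T(|ψ⟩⟨ψ|) A) − tr(T(|α0|² |ψ0⟩⟨ψ0| + |α1|² |ψ1⟩⟨ψ1|) A)| ≤ ((δ·‖B‖ + σ0 + σ1) / |b0 − b1|) · ‖A‖. -/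

import Mathlib

open Kronecker Matrix
open scoped ComplexOrder

/-- The ℓ²-operator norm of a square complex matrix. -/
noncomputable def l2OpNorm {k : Type*} [Fintype k] [DecidableEq k]
    (M : Matrix k k ℂ) : ℝ := ‖Matrix.toEuclideanCLM (𝕜 := ℂ) M‖

/-!
Write `τ = S Sᴴ`. The matrix `U (S ⊗ |ψ⟩)`, read as a vector `V ψ` of a larger Hilbert space,
depends linearly on `ψ`, and `tr (T(|ψ⟩⟨ψ|) A) = ⟨V ψ, (1 ⊗ A) V ψ⟩`, so superpositions can be
studied on vector states. There the difference to bound consists of the cross terms `⟨y, A x⟩` and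
`⟨x, A y⟩` with `x = V ψ₀` and `y = V ψ₁`. If `B` acted on `x` and `y` as the scalars `b₀` and `b₁`
and commuted with `A`, then `(b₀ - b₁) ⟨y, A x⟩ = ⟨y, [A, B] x⟩ = 0`. In general the defects
`‖(B - b₀) x‖` and `‖(B - b₁) y‖`, which are the standard deviations of `B`, and the norm of
`[A, B]` measure the failure of this identity.
-/

section Hilbert

open scoped InnerProductSpace

variable {𝕜 E : Type*} [RCLike 𝕜] [NormedAddCommGroup E] [InnerProductSpace 𝕜 E]

theorem abs_sub_mul_norm_inner_apply_le (A : E →L[𝕜] E) {B : E →L[𝕜] E}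
    (hB : (B : E →ₗ[𝕜] E).IsSymmetric) (x y : E) (a b : ℝ) :
    |a - b| * ‖⟪y, A x⟫_𝕜‖ ≤ ‖A * B - B * A‖ * (‖x‖ * ‖y‖) +
      ‖A‖ * (‖B x - (a : 𝕜) • x‖ * ‖y‖ + ‖x‖ * ‖B y - (b : 𝕜) • y‖) := by
  have norm_inner_le (T : E →L[𝕜] E) (u v : E) : ‖⟪v, T u⟫_𝕜‖ ≤ ‖T‖ * (‖u‖ * ‖v‖) := by
    calc ‖⟪v, T u⟫_𝕜‖ ≤ ‖v‖ * ‖T u‖ := norm_inner_le_norm _ _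
      _ ≤ ‖v‖ * (‖T‖ * ‖u‖) := by gcongr; exact T.le_opNorm u
      _ = ‖T‖ * (‖u‖ * ‖v‖) := by ring
  have split : ((a - b : ℝ) : 𝕜) * ⟪y, A x⟫_𝕜 =
      ⟪y, (A * B - B * A) x⟫_𝕜 - ⟪y, A (B x - (a : 𝕜) • x)⟫_𝕜 +
        ⟪B y - (b : 𝕜) • y, A x⟫_𝕜 := by
    have hBA : ⟪B y, A x⟫_𝕜 = ⟪y, B (A x)⟫_𝕜 := hB y (A x)
    simp only [_root_.sub_apply, mul_apply_eq_comp, map_sub, map_smul, inner_sub_left,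
      inner_sub_right, inner_smul_left, inner_smul_right, RCLike.conj_ofReal, hBA]
    ring
  calc |a - b| * ‖⟪y, A x⟫_𝕜‖ = ‖((a - b : ℝ) : 𝕜) * ⟪y, A x⟫_𝕜‖ := by
        rw [norm_mul, RCLike.norm_ofReal]
    _ ≤ ‖⟪y, (A * B - B * A) x⟫_𝕜‖ + ‖⟪y, A (B x - (a : 𝕜) • x)⟫_𝕜‖ +
        ‖⟪B y - (b : 𝕜) • y, A x⟫_𝕜‖ := by
      rw [split]
      exact norm_add_le_of_le (norm_sub_le _ _) le_rfl
    _ ≤ ‖A * B - B * A‖ * (‖x‖ * ‖y‖) + ‖A‖ * (‖B x - (a : 𝕜) • x‖ * ‖y‖) +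
        ‖A‖ * (‖x‖ * ‖B y - (b : 𝕜) • y‖) := by
      gcongr <;> exact norm_inner_le _ _ _
    _ = _ := by ring

theorem norm_inner_superposition_sub_mixture_le (A : E →ₗ[𝕜] E) (x y : E) (α β : 𝕜) :
    ‖⟪α • x + β • y, A (α • x + β • y)⟫_𝕜 -
        (((‖α‖ ^ 2 : ℝ) : 𝕜) * ⟪x, A x⟫_𝕜 + ((‖β‖ ^ 2 : ℝ) : 𝕜) * ⟪y, A y⟫_𝕜)‖ ≤
      ‖α‖ * ‖β‖ * (‖⟪y, A x⟫_𝕜‖ + ‖⟪x, A y⟫_𝕜‖) := by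
  have cross_terms : ⟪α • x + β • y, A (α • x + β • y)⟫_𝕜 -
        (((‖α‖ ^ 2 : ℝ) : 𝕜) * ⟪x, A x⟫_𝕜 + ((‖β‖ ^ 2 : ℝ) : 𝕜) * ⟪y, A y⟫_𝕜) =
      α * star β * ⟪y, A x⟫_𝕜 + star α * β * ⟪x, A y⟫_𝕜 := by
    simp only [RCLike.ofReal_pow, ← RCLike.mul_conj, map_add, map_smul, inner_add_left,
      inner_add_right, inner_smul_left, inner_smul_right, RCLike.star_def]
    ring
  calc _ ≤ ‖α * star β * ⟪y, A x⟫_𝕜‖ + ‖star α * β * ⟪x, A y⟫_𝕜‖ := by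
        rw [cross_terms]
        exact norm_add_le _ _
    _ = _ := by
      simp only [norm_mul, norm_star]
      ring

theorem norm_apply_sub_smul_eq_of_inner_eq {B : E →ₗ[𝕜] E} (hB : B.IsSymmetric) {x : E}
    (hx : ‖x‖ = 1) {b σ : ℝ} (hσ : 0 ≤ σ) (hmean : ⟪x, B x⟫_𝕜 = b)
    (hsq : ⟪x, B (B x)⟫_𝕜 = ((σ ^ 2 + b ^ 2 : ℝ) : 𝕜)) :
    ‖B x - (b : 𝕜) • x‖ = σ := by
  have hmean' : ⟪B x, x⟫_𝕜 = (b : 𝕜) := (hB x x).trans hmean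
  have hsq' : ⟪B x, B x⟫_𝕜 = ((σ ^ 2 + b ^ 2 : ℝ) : 𝕜) := (hB x (B x)).trans hsq
  have variance : ⟪B x - (b : 𝕜) • x, B x - (b : 𝕜) • x⟫_𝕜 = ((σ ^ 2 : ℝ) : 𝕜) := by
    have hxx : ⟪x, x⟫_𝕜 = 1 := inner_self_eq_one_of_norm_eq_one hx
    simp only [inner_sub_left, inner_sub_right, inner_smul_left, inner_smul_right, hmean, hmean',
      hsq', hxx, RCLike.conj_ofReal]
    push_cast
    ring
  rw [inner_self_eq_norm_sq_to_K] at variance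
  exact (pow_left_inj₀ (norm_nonneg _) hσ two_ne_zero).1 (by exact_mod_cast variance)

theorem abs_sub_mul_norm_inner_superposition_sub_mixture_le (A : E →L[𝕜] E) {B : E →L[𝕜] E}
    (hB : (B : E →ₗ[𝕜] E).IsSymmetric) {x y : E} (hx : ‖x‖ = 1) (hy : ‖y‖ = 1)
    {a b s t : ℝ} (hs : 0 ≤ s) (ht : 0 ≤ t)
    (hmean_x : ⟪x, B x⟫_𝕜 = a)
    (hsq_x : ⟪x, B (B x)⟫_𝕜 = ((s ^ 2 + a ^ 2 : ℝ) : 𝕜))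
    (hmean_y : ⟪y, B y⟫_𝕜 = b)
    (hsq_y : ⟪y, B (B y)⟫_𝕜 = ((t ^ 2 + b ^ 2 : ℝ) : 𝕜))
    (α β : 𝕜) :
    |a - b| * ‖⟪α • x + β • y, A (α • x + β • y)⟫_𝕜 -
        (((‖α‖ ^ 2 : ℝ) : 𝕜) * ⟪x, A x⟫_𝕜 + ((‖β‖ ^ 2 : ℝ) : 𝕜) * ⟪y, A y⟫_𝕜)‖ ≤
      2 * ‖α‖ * ‖β‖ * (‖A * B - B * A‖ + ‖A‖ * (s + t)) := by
  have hdev_x : ‖B x - (a : 𝕜) • x‖ = s :=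
    norm_apply_sub_smul_eq_of_inner_eq hB hx hs hmean_x hsq_x
  have hdev_y : ‖B y - (b : 𝕜) • y‖ = t :=
    norm_apply_sub_smul_eq_of_inner_eq hB hy ht hmean_y hsq_y
  have hyx := abs_sub_mul_norm_inner_apply_le A hB x y a b
  have hxy := abs_sub_mul_norm_inner_apply_le A hB y x b a
  simp only [hx, hy, hdev_x, hdev_y, abs_sub_comm b a, one_mul, mul_one] at hyx hxy
  calc _ ≤ |a - b| * (‖α‖ * ‖β‖ * (‖⟪y, A x⟫_𝕜‖ + ‖⟪x, A y⟫_𝕜‖)) := by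
        gcongr
        exact norm_inner_superposition_sub_mixture_le (A : E →ₗ[𝕜] E) x y α β
    _ = ‖α‖ * ‖β‖ * (|a - b| * ‖⟪y, A x⟫_𝕜‖ + |a - b| * ‖⟪x, A y⟫_𝕜‖) := by ring
    _ ≤ ‖α‖ * ‖β‖ * (2 * (‖A * B - B * A‖ + ‖A‖ * (s + t))) := by
      gcongr
      linarith
    _ = _ := by ring

end Hilbert

section Purification

variable {μ ι κ ν : Type*} [Fintype μ] [Fintype ι] [Fintype κ] [Fintype ν]

open scoped MatrixOrder in
theorem exists_eq_mul_conjTranspose_of_posSemidef {τ : Matrix μ μ ℂ} (hτ : τ.PosSemidef) :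
    ∃ S : Matrix μ μ ℂ, τ = S * Sᴴ := by
  classical
  obtain ⟨C, hC⟩ := CStarAlgebra.nonneg_iff_eq_mul_star_self.mp hτ.nonneg
  exact ⟨C, hC⟩

variable (κ) in
/-- The ampliation `A ↦ 1 ⊗ A` as a representation of the algebra of matrices by operators on
`ℂ^κ ⊗ ℂ^ν`. -/
noncomputable def ampliation [DecidableEq κ] [DecidableEq ν] :
    Matrix ν ν ℂ →⋆ₐ[ℂ] (EuclideanSpace ℂ (κ × ν) →L[ℂ] EuclideanSpace ℂ (κ × ν)) where
  toFun A := toEuclideanCLM (𝕜 := ℂ) ((1 : Matrix κ κ ℂ) ⊗ₖ A)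
  map_one' := by rw [one_kronecker_one, map_one]
  map_mul' A B := by rw [← map_mul, ← mul_kronecker_mul, one_mul]
  map_zero' := by rw [kronecker_zero, map_zero]
  map_add' A B := by rw [kronecker_add, map_add]
  commutes' c := by
    rw [Algebra.algebraMap_eq_smul_one, kronecker_smul, one_kronecker_one, map_smul, map_one,
      Algebra.algebraMap_eq_smul_one]
  map_star' A := by
    rw [← map_star, star_eq_conjTranspose, star_eq_conjTranspose, conjTranspose_kronecker,
      conjTranspose_one]

theorem ampliation_toLp_vec [DecidableEq κ] [DecidableEq ν] (A : Matrix ν ν ℂ)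
    (R : Matrix ν κ ℂ) :
    ampliation κ A (WithLp.toLp 2 (vec R)) = WithLp.toLp 2 (vec (A * R)) := by
  rw [vec_mul_eq_mulVec]
  rfl

theorem isSymmetric_ampliation [DecidableEq κ] [DecidableEq ν] {B : Matrix ν ν ℂ}
    (hB : B.IsHermitian) :
    (ampliation κ B : EuclideanSpace ℂ (κ × ν) →ₗ[ℂ] EuclideanSpace ℂ (κ × ν)).IsSymmetric :=
  (IsSelfAdjoint.map (f := ampliation κ) hB).isSymmetric

open scoped Matrix.Norms.L2Operator in
theorem norm_ampliation_le [DecidableEq κ] [DecidableEq ν] (A : Matrix ν ν ℂ) :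
    ‖ampliation κ A‖ ≤ l2OpNorm A :=
  NonUnitalStarAlgHom.norm_apply_le (ampliation κ) A

/-- A vector purifying the state `U (S Sᴴ ⊗ |ψ⟩⟨ψ|) Uᴴ`, depending linearly on `ψ`. It is the
matrix `U (S ⊗ |ψ⟩)` read as an element of `ℂ^(κ × Unit) ⊗ ℂ^ν`, where `Unit` indexes the single
column of `|ψ⟩`. -/
noncomputable def purification (U : Matrix ν (μ × ι) ℂ) (S : Matrix μ κ ℂ) :
    (ι → ℂ) →ₗ[ℂ] EuclideanSpace ℂ ((κ × Unit) × ν) where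
  toFun ψ := WithLp.toLp 2 (vec (U * (S ⊗ₖ replicateCol Unit ψ)))
  map_add' φ ψ := by
    rw [replicateCol_add, kronecker_add, Matrix.mul_add, vec_add, WithLp.toLp_add]
  map_smul' c ψ := by
    rw [replicateCol_smul, kronecker_smul, Matrix.mul_smul, vec_smul, WithLp.toLp_smul,
      RingHom.id_apply]

theorem inner_purification_ampliation [DecidableEq κ] [DecidableEq ν] (U : Matrix ν (μ × ι) ℂ)
    (S : Matrix μ κ ℂ) (ψ : ι → ℂ) (A : Matrix ν ν ℂ) :
    inner ℂ (purification U S ψ) (ampliation (κ × Unit) A (purification U S ψ)) =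
      (U * ((S * Sᴴ) ⊗ₖ vecMulVec ψ (star ψ)) * Uᴴ * A).trace := by
  set R := U * (S ⊗ₖ replicateCol Unit ψ) with hR
  have hRR : R * Rᴴ = U * ((S * Sᴴ) ⊗ₖ vecMulVec ψ (star ψ)) * Uᴴ := by
    simp only [hR, conjTranspose_mul, conjTranspose_kronecker, conjTranspose_replicateCol,
      vecMulVec_eq Unit, mul_kronecker_mul, Matrix.mul_assoc]
  calc _ = inner ℂ (WithLp.toLp 2 (vec R)) (WithLp.toLp 2 (vec (A * R))) := by
        rw [← ampliation_toLp_vec]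
        rfl
    _ = (Rᴴ * (A * R)).trace := by
      rw [EuclideanSpace.inner_toLp_toLp, dotProduct_comm, star_vec_dotProduct_vec]
    _ = _ := by rw [← hRR, trace_mul_comm, Matrix.mul_assoc A, trace_mul_comm A]

theorem norm_purification [DecidableEq μ] [DecidableEq ι] {U : Matrix ν (μ × ι) ℂ}
    (hU : Uᴴ * U = 1) {S : Matrix μ κ ℂ} (hS : (S * Sᴴ).trace = 1) {ψ : ι → ℂ}
    (hψ : star ψ ⬝ᵥ ψ = 1) : ‖purification U S ψ‖ = 1 := by
  classical
  have inner_self : inner ℂ (purification U S ψ) (purification U S ψ) = 1 := by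
    have h := inner_purification_ampliation U S ψ 1
    rwa [map_one, one_apply_eq_self, Matrix.mul_one, trace_mul_comm,
      ← Matrix.mul_assoc, hU, Matrix.one_mul, trace_kronecker, hS, trace_vecMulVec,
      dotProduct_comm, hψ, one_mul] at h
  rw [← sq_eq_sq₀ (norm_nonneg _) zero_le_one, ← inner_self_eq_norm_sq (𝕜 := ℂ), inner_self]
  norm_num

end Purification

theorem stmt8_general {μ ι ν : Type*} [Fintype μ] [Fintype ι] [Fintype ν]
    [DecidableEq μ] [DecidableEq ι] [DecidableEq ν]
    {τ : Matrix μ μ ℂ} (hτpos : τ.PosSemidef) (hτtr : τ.trace = 1)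
    {ψ0 ψ1 : ι → ℂ} (hψ0 : star ψ0 ⬝ᵥ ψ0 = 1) (hψ1 : star ψ1 ⬝ᵥ ψ1 = 1)
    {U : Matrix ν (μ × ι) ℂ} (hU : Uᴴ * U = 1)
    {B : Matrix ν ν ℂ} (hB : B.IsHermitian)
    {b0 b1 σ0 σ1 : ℝ} (hσ0 : 0 ≤ σ0) (hσ1 : 0 ≤ σ1)
    (hb0 : (U * (τ ⊗ₖ vecMulVec ψ0 (star ψ0)) * Uᴴ * B).trace = (b0 : ℂ))
    (hb1 : (U * (τ ⊗ₖ vecMulVec ψ1 (star ψ1)) * Uᴴ * B).trace = (b1 : ℂ))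
    (hv0 : (U * (τ ⊗ₖ vecMulVec ψ0 (star ψ0)) * Uᴴ * (B * B)).trace =
      ((σ0 ^ 2 + b0 ^ 2 : ℝ) : ℂ))
    (hv1 : (U * (τ ⊗ₖ vecMulVec ψ1 (star ψ1)) * Uᴴ * (B * B)).trace =
      ((σ1 ^ 2 + b1 ^ 2 : ℝ) : ℂ))
    (hb : b0 ≠ b1) {α0 α1 : ℂ} (hα : ‖α0‖ ^ 2 + ‖α1‖ ^ 2 ≤ 1) {A : Matrix ν ν ℂ} {δ : ℝ}
    (hcomm : l2OpNorm (A * B - B * A) ≤ δ * l2OpNorm A * l2OpNorm B) :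
    ‖(U * (τ ⊗ₖ vecMulVec (α0 • ψ0 + α1 • ψ1) (star (α0 • ψ0 + α1 • ψ1))) * Uᴴ * A).trace -
        (U * (τ ⊗ₖ (((‖α0‖ ^ 2 : ℝ) : ℂ) • vecMulVec ψ0 (star ψ0) +
          ((‖α1‖ ^ 2 : ℝ) : ℂ) • vecMulVec ψ1 (star ψ1))) * Uᴴ * A).trace‖ ≤
      ((δ * l2OpNorm B + σ0 + σ1) / |b0 - b1|) * l2OpNorm A := by
  obtain ⟨S, rfl⟩ := exists_eq_mul_conjTranspose_of_posSemidef hτpos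
  let π := ampliation (ν := ν) (μ × Unit)
  let V := purification U S
  have hV (ψ : ι → ℂ) (X : Matrix ν ν ℂ) :
      (U * ((S * Sᴴ) ⊗ₖ vecMulVec ψ (star ψ)) * Uᴴ * X).trace = inner ℂ (V ψ) (π X (V ψ)) :=
    (inner_purification_ampliation U S ψ X).symm
  have hV0 : ‖V ψ0‖ = 1 := norm_purification hU hτtr hψ0
  have hV1 : ‖V ψ1‖ = 1 := norm_purification hU hτtr hψ1
  have hπB : (π B).toLinearMap.IsSymmetric := isSymmetric_ampliation hB
  have hπ (X : Matrix ν ν ℂ) : ‖π X‖ ≤ l2OpNorm X := norm_ampliation_le X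
  rw [hV] at hb0 hb1
  rw [hV, map_mul] at hv0 hv1
  have cross_bound := abs_sub_mul_norm_inner_superposition_sub_mixture_le (π A) hπB hV0 hV1 hσ0 hσ1
    hb0 hv0 hb1 hv1 α0 α1
  rw [← map_mul, ← map_mul, ← map_sub] at cross_bound
  simp only [kronecker_add, kronecker_smul, Matrix.mul_add, Matrix.add_mul, Matrix.mul_smul,
    Matrix.smul_mul, trace_add, trace_smul, smul_eq_mul, hV, map_add V, map_smul V]
  rw [div_mul_eq_mul_div, le_div_iff₀' (abs_pos.2 (sub_ne_zero.2 hb))]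
  calc _ ≤ _ := cross_bound
    _ ≤ 1 * (‖π (A * B - B * A)‖ + ‖π A‖ * (σ0 + σ1)) := by
      gcongr
      nlinarith only [hα, sq_nonneg (‖α0‖ - ‖α1‖)]
    _ ≤ 1 * (δ * l2OpNorm A * l2OpNorm B + l2OpNorm A * (σ0 + σ1)) := by
      gcongr
      · exact (hπ _).trans hcomm
      · exact hπ A
    _ = _ := by ring

theorem stmt8 {m n : ℕ}
    (τ : Matrix (Fin m) (Fin m) ℂ) (hτpos : τ.PosSemidef) (hτtr : τ.trace = 1)
    (ψ0 ψ1 : Fin n → ℂ)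
    (hψ00 : star ψ0 ⬝ᵥ ψ0 = 1) (hψ11 : star ψ1 ⬝ᵥ ψ1 = 1) (hψ01 : star ψ0 ⬝ᵥ ψ1 = 0)
    (U : Matrix (Fin m × Fin n) (Fin m × Fin n) ℂ)
    (hU : U ∈ Matrix.unitaryGroup (Fin m × Fin n) ℂ)
    (B : Matrix (Fin m × Fin n) (Fin m × Fin n) ℂ) (hB : B.IsHermitian)
    (b0 b1 σ0 σ1 : ℝ) (hσ0 : 0 ≤ σ0) (hσ1 : 0 ≤ σ1)
    (hb0 : (U * (τ ⊗ₖ vecMulVec ψ0 (star ψ0)) * Uᴴ * B).trace = (b0 : ℂ))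
    (hb1 : (U * (τ ⊗ₖ vecMulVec ψ1 (star ψ1)) * Uᴴ * B).trace = (b1 : ℂ))
    (hv0 : (U * (τ ⊗ₖ vecMulVec ψ0 (star ψ0)) * Uᴴ * (B * B)).trace =
      ((σ0 ^ 2 + b0 ^ 2 : ℝ) : ℂ))
    (hv1 : (U * (τ ⊗ₖ vecMulVec ψ1 (star ψ1)) * Uᴴ * (B * B)).trace =
      ((σ1 ^ 2 + b1 ^ 2 : ℝ) : ℂ))
    (hb : b0 ≠ b1)
    (α0 α1 : ℂ) (hα : ‖α0‖ ^ 2 + ‖α1‖ ^ 2 = 1)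
    (A : Matrix (Fin m × Fin n) (Fin m × Fin n) ℂ) (hA : A.IsHermitian)
    (δ : ℝ) (hδ : 0 ≤ δ) (hcomm : l2OpNorm (A * B - B * A) ≤ δ * l2OpNorm A * l2OpNorm B) :
    ‖(U * (τ ⊗ₖ vecMulVec (α0 • ψ0 + α1 • ψ1) (star (α0 • ψ0 + α1 • ψ1))) * Uᴴ * A).trace -
        (U * (τ ⊗ₖ (((‖α0‖ ^ 2 : ℝ) : ℂ) • vecMulVec ψ0 (star ψ0) +
          ((‖α1‖ ^ 2 : ℝ) : ℂ) • vecMulVec ψ1 (star ψ1))) * Uᴴ * A).trace‖ ≤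
      ((δ * l2OpNorm B + σ0 + σ1) / |b0 - b1|) * l2OpNorm A := by
  exact stmt8_general hτpos hτtr hψ00 hψ11 (mem_unitaryGroup_iff'.1 hU) hB hσ0 hσ1 hb0 hb1 hv0 hv1
    hb hα.le hcomm
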